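/- Let m > n ≥ 1, let F_3 ∈ K[y_1,…,y_n] ⊂ K[y_1,…,y_m] be a non-degenerate homogeneous cubic form, and let H be a homogeneous quadratic form each of whose monomials is of the form y_i y_j with 1 ≤ i ≤ n and 1 ≤ j ≤ m. Then the Artinian Gorenstein local K-algebras A_{F_3 + y_{n+1}^2 + ⋯ + y_m^2 + H} and A_{F_3 + y_{n+1}^2 + ⋯ + y_m^2} are isomorphic as K-algebras. -/

import Mathlib

/-- The contraction (derivative) action of the power series ring
`R = K[[x_1,…,x_n]]` on the polynomial ring `P = K[y_1,…,y_n]`: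
`f ∘ g = f(∂/∂y_1, …, ∂/∂y_n)(g)`.  It is defined on the monomial basis by
`x^α ∘ y^β = (∏ i, (β i)!/(β i - α i)!) y^(β-α)` (zero unless `α ≤ β`), the honest
iterated partial derivative, and extended `K`-linearly. -/
noncomputable def contract {K : Type*} [Field K] {n : ℕ} (f : MvPowerSeries (Fin n) K) :
    MvPolynomial (Fin n) K →ₗ[K] MvPolynomial (Fin n) K :=
  (MvPolynomial.basisMonomials (Fin n) K).constr K fun β =>
    ∑ α ∈ Finset.Iic β,
      (MvPowerSeries.coeff α f * ∏ i, ((β i).descFactorial (α i) : K)) •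
        MvPolynomial.monomial (β - α) (1 : K)

theorem contract_add {K : Type*} [Field K] {n : ℕ} (f g : MvPowerSeries (Fin n) K) :
    contract (f + g) = contract f + contract g := by
  unfold contract
  rw [← map_add]
  congr 1
  funext β
  simp only [Pi.add_apply]
  rw [← Finset.sum_add_distrib]
  exact Finset.sum_congr rfl fun α _ => by rw [map_add, add_mul, add_smul]

theorem contract_zero {K : Type*} [Field K] {n : ℕ} :
    contract (0 : MvPowerSeries (Fin n) K) = 0 := by
  unfold contract
  convert map_zero ((MvPolynomial.basisMonomials (Fin n) K).constr
    (M' := MvPolynomial (Fin n) K) K) using 2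
  funext β
  simp

/-- The annihilator `Ann_R(F) = Ann_R(⟨F⟩_R)` of (the cyclic `R`-submodule of
`P` generated by) a polynomial `F` under the contraction action; an ideal of
`R = K[[x_1,…,x_n]]`.  The Artinian Gorenstein local algebra associated to `F`
is `A_F = R ⧸ annR F`. -/
noncomputable def annR {K : Type*} [Field K] {n : ℕ} (F : MvPolynomial (Fin n) K) :
    Ideal (MvPowerSeries (Fin n) K) where
  carrier := {f | ∀ u : MvPowerSeries (Fin n) K, contract (u * f) F = 0}
  zero_mem' := fun u => by rw [mul_zero, contract_zero]; rfl
  add_mem' := fun {a b} ha hb u => by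
    rw [mul_add, contract_add, LinearMap.add_apply, ha u, hb u, add_zero]
  smul_mem' := fun c f hf u => by
    rw [smul_eq_mul, ← mul_assoc]; exact hf (u * c)

/-- The linear form `l 1 • x_1 + ⋯ + l n • x_n` in `R = K[[x_1,…,x_n]]`. -/
noncomputable def linForm {K : Type*} [Field K] {n : ℕ} (l : Fin n → K) :
    MvPowerSeries (Fin n) K :=
  ∑ i, MvPowerSeries.monomial (Finsupp.single i 1) (l i)

/-- A polynomial `F ∈ K[y_1,…,y_n]` is non-degenerate if `Ann_R(F)` contains no
nonzero linear form; equivalently, the embedding dimension of `A_F` is `n`,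
i.e. `HF_{A_F}(1) = n`. -/
def nondegenerate {K : Type*} [Field K] {n : ℕ} (F : MvPolynomial (Fin n) K) : Prop :=
  ∀ l : Fin n → K, linForm l ∈ annR F → l = 0

/-!
Since `(f ∘ y^β)(0) = β! · coeff β f`, in characteristic zero `Ann F` is the largest ideal on which
the functional `f ↦ (f ∘ F)(0)` vanishes. Hence `A_F ≅ A_G` as soon as some substitution
`φ : x_i ↦ x_i + q_i` with all `q_i` of order at least two carries one functional to the other,
`(φ f ∘ G)(0) = (f ∘ F)(0)`: such a `φ` is surjective modulo every power of the maximal ideal.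

Let `G = F + Q` with `F` a form of degree `d + 1 ≥ 3` and `Q` of degree at most `d`. If the `q_i`
have order at least `d` and `(q_i ∘ G)(0) = 0`, then `φ` changes the functional of `G` only on the
quadratic monomials, where its value at `x_i x_j` grows by `((x_i q_j + x_j q_i) ∘ F)(0)`. The
result is the functional of `G + H` if these numbers are the second derivatives of the quadratic
form `H`. As `x_i x_j ∘ H = 0` unless `x_i` or `x_j` is a variable of `F`, it suffices to prescribe
the values `(x_i q_j ∘ F)(0)` for the variables `x_i` of `F`, and this is possible because `F` is
non-degenerate.
-/

open MvPolynomial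

section IdealOfVars

variable {σ R : Type*} [CommSemiring R] {p : MvPolynomial σ R} {k : ℕ}

lemma mem_pow_idealOfVars_of_isHomogeneous (hp : p.IsHomogeneous k) : p ∈ idealOfVars σ R ^ k :=
  (mem_pow_idealOfVars_iff k p).2 fun _ hβ => (hp.degree_eq_sum_deg_support hβ).le

lemma X_mul_mem_pow_idealOfVars (i : σ) (hp : p ∈ idealOfVars σ R ^ k) :
    X i * p ∈ idealOfVars σ R ^ (k + 1) :=
  pow_succ' (idealOfVars σ R) k ▸
    Ideal.mul_mem_mul (Ideal.subset_span (Set.mem_range_self i)) hp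

end IdealOfVars

section Unipotent

variable {σ R : Type*} [CommRing R]

lemma exists_monomial_eq_X_mul {s : σ →₀ ℕ} {k : ℕ} (hs : s.degree = k + 1) :
    ∃ i t, t.degree = k ∧ (monomial s 1 : MvPolynomial σ R) = X i * monomial t 1 := by
  obtain ⟨i, hi⟩ : ∃ i, s i ≠ 0 := by
    by_contra! h
    simp [show s = 0 from Finsupp.ext h] at hs
  have hsplit : Finsupp.single i 1 + (s - Finsupp.single i 1) = s :=
    add_tsub_cancel_of_le (Finsupp.single_le_iff.2 (Nat.one_le_iff_ne_zero.2 hi))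
  refine ⟨i, s - Finsupp.single i 1, ?_, by rw [X, monomial_mul, hsplit, one_mul]⟩
  rw [← hsplit, map_add, Finsupp.degree_single, add_comm] at hs
  exact Nat.succ_injective hs

lemma linearMap_ext_of_degree_lt_three {M : Type*} [AddCommMonoid M] [Module R M]
    {L L' : MvPolynomial σ R →ₗ[R] M} (h_one : L 1 = L' 1) (h_X : ∀ i, L (X i) = L' (X i))
    (h_X_mul_X : ∀ i j, L (X i * X j) = L' (X i * X j))
    (h_pow : ∀ f ∈ idealOfVars σ R ^ 3, L f = L' f) : L = L' := by
  refine (basisMonomials σ R).ext fun s => ?_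
  simp only [coe_basisMonomials]
  have monomial_of_degree_zero {t : σ →₀ ℕ} (ht : t.degree = 0) :
      (monomial t 1 : MvPolynomial σ R) = 1 := by
    rw [(Finsupp.degree_eq_zero_iff t).1 ht, monomial_zero', C_1]
  match hs : s.degree with
  | 0 => rw [monomial_of_degree_zero hs, h_one]
  | 1 =>
    obtain ⟨i, t, ht, hst⟩ := exists_monomial_eq_X_mul (R := R) hs
    rw [hst, monomial_of_degree_zero ht, mul_one, h_X]
  | 2 =>
    obtain ⟨i, t, ht, hst⟩ := exists_monomial_eq_X_mul (R := R) hs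
    obtain ⟨j, u, hu, htu⟩ := exists_monomial_eq_X_mul (R := R) ht
    rw [hst, htu, monomial_of_degree_zero hu, mul_one, h_X_mul_X]
  | k + 3 =>
    exact h_pow _ (Ideal.pow_le_pow_right (Nat.le_add_left 3 k)
      (mem_pow_idealOfVars_of_isHomogeneous (isHomogeneous_monomial 1 hs)))

variable {φ : MvPolynomial σ R →ₐ[R] MvPolynomial σ R} {r : ℕ}

lemma map_monomial_sub_mem_pow_idealOfVars
    (hφ : ∀ i, φ (X i) - X i ∈ idealOfVars σ R ^ (r + 1)) {s : σ →₀ ℕ} {k : ℕ}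
    (hs : s.degree = k) :
    φ (monomial s 1) - monomial s 1 ∈ idealOfVars σ R ^ (k + r) := by
  induction k generalizing s with
  | zero => simp [(Finsupp.degree_eq_zero_iff s).1 hs]
  | succ k ih =>
    obtain ⟨i, t, ht, hst⟩ := exists_monomial_eq_X_mul (R := R) hs
    have hX : φ (X i) ∈ idealOfVars σ R :=
      (Submodule.sub_mem_iff_left _ (Ideal.subset_span (Set.mem_range_self i))).1
        (Ideal.pow_le_self r.succ_ne_zero (hφ i))
    have hmon : (monomial t 1 : MvPolynomial σ R) ∈ idealOfVars σ R ^ k :=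
      mem_pow_idealOfVars_of_isHomogeneous (isHomogeneous_monomial 1 ht)
    have leibniz : φ (monomial s 1) - monomial s 1 =
        φ (X i) * (φ (monomial t 1) - monomial t 1) + (φ (X i) - X i) * monomial t 1 := by
      rw [hst, map_mul]; ring
    rw [leibniz]
    refine add_mem ?_ ?_
    · rw [add_right_comm, pow_succ']
      exact Ideal.mul_mem_mul hX (ih ht)
    · rw [show k + 1 + r = r + 1 + k by ring, pow_add]
      exact Ideal.mul_mem_mul (hφ i) hmon

lemma map_sub_mem_pow_idealOfVars (hφ : ∀ i, φ (X i) - X i ∈ idealOfVars σ R ^ (r + 1))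
    {k : ℕ} {f : MvPolynomial σ R} (hf : f ∈ idealOfVars σ R ^ k) :
    φ f - f ∈ idealOfVars σ R ^ (k + r) := by
  have hsum : φ f - f =
      ∑ s ∈ f.support, C (f.coeff s) * (φ (monomial s 1) - monomial s 1) := by
    conv_lhs => rw [f.as_sum, map_sum, ← Finset.sum_sub_distrib]
    refine Finset.sum_congr rfl fun s _ => ?_
    rw [← mul_one (f.coeff s), ← C_mul_monomial, map_mul, algHom_C, algebraMap_eq, mul_sub,
      mul_one]
  rw [hsum]
  refine sum_mem fun s hs => Ideal.mul_mem_left _ _ ?_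
  exact Ideal.pow_le_pow_right (Nat.add_le_add_right ((mem_pow_idealOfVars_iff k f).1 hf s hs) r)
    (map_monomial_sub_mem_pow_idealOfVars hφ rfl)

lemma exists_map_sub_mem_pow_idealOfVars (hφ : ∀ i, φ (X i) - X i ∈ idealOfVars σ R ^ 2)
    (f : MvPolynomial σ R) (N : ℕ) : ∃ g, φ g - f ∈ idealOfVars σ R ^ N := by
  induction N with
  | zero => exact ⟨0, by simp⟩
  | succ N ih =>
    obtain ⟨g, hg⟩ := ih
    refine ⟨g - (φ g - f), ?_⟩
    have herror : φ (g - (φ g - f)) - f = -(φ (φ g - f) - (φ g - f)) := by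
      rw [map_sub]; ring
    rw [herror]
    exact neg_mem (map_sub_mem_pow_idealOfVars hφ hg)

end Unipotent

section Apolarity

variable {σ τ R : Type*} [CommSemiring R]

/-- The apolarity pairing `(F, f) ↦ (f ∘ F)(0)` between polynomials and power series, given on
monomials by `⟨y^β, x^α⟩ = β!` if `α = β` and `0` otherwise. -/
noncomputable def apolarPairing : MvPolynomial σ R →ₗ[R] MvPowerSeries σ R →ₗ[R] R :=
  (basisMonomials σ R).constr R fun β =>
    (β.prod fun _ k => (k.factorial : R)) • MvPowerSeries.coeff β

/-- The functional `f ↦ (f ∘ F)(0)` on polynomials `f`, bundled linearly in `F`: the restriction of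
`apolarPairing` to polynomials in its second argument. -/
noncomputable def apolarForm : MvPolynomial σ R →ₗ[R] MvPolynomial σ R →ₗ[R] R :=
  apolarPairing.compl₂ (coeToMvPowerSeries.algHom R).toLinearMap

lemma apolarForm_apply (F p : MvPolynomial σ R) :
    apolarForm F p = apolarPairing F (p : MvPowerSeries σ R) := by
  simp [apolarForm, coeToMvPowerSeries.algHom_apply]

lemma apolarPairing_monomial (β : σ →₀ ℕ) (c : R) (f : MvPowerSeries σ R) :
    apolarPairing (monomial β c) f =
      c * ((β.prod fun _ k => (k.factorial : R)) * MvPowerSeries.coeff β f) := by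
  have hbasis : monomial β c = c • basisMonomials σ R β := by simp [smul_monomial]
  rw [hbasis, map_smul, apolarPairing, Module.Basis.constr_basis]
  simp only [LinearMap.smul_apply, smul_eq_mul]

lemma apolarPairing_eq_zero {F : MvPolynomial σ R} {f : MvPowerSeries σ R}
    (h : ∀ β ∈ F.support, MvPowerSeries.coeff β f = 0) : apolarPairing F f = 0 := by
  rw [F.as_sum, map_sum, LinearMap.sum_apply]
  exact Finset.sum_eq_zero fun β hβ => by
    rw [apolarPairing_monomial, h β hβ, mul_zero, mul_zero]

lemma apolarPairing_eq_zero_of_totalDegree_lt_order {F : MvPolynomial σ R}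
    {f : MvPowerSeries σ R} (h : F.totalDegree < f.order) : apolarPairing F f = 0 :=
  apolarPairing_eq_zero fun _ hβ =>
    MvPowerSeries.coeff_of_lt_order ((Nat.cast_le.2 (le_totalDegree hβ)).trans_lt h)

lemma apolarForm_eq_zero {F p : MvPolynomial σ R} (h : Disjoint F.support p.support) :
    apolarForm F p = 0 := by
  rw [apolarForm_apply]
  refine apolarPairing_eq_zero fun β hβ => ?_
  rw [coeff_coe]
  exact notMem_support_iff.1 (Finset.disjoint_left.1 h hβ)

lemma apolarForm_eq_zero_of_mem_pow_idealOfVars {F p : MvPolynomial σ R} {k : ℕ}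
    (hF : F.totalDegree < k) (hp : p ∈ idealOfVars σ R ^ k) : apolarForm F p = 0 :=
  apolarForm_eq_zero <| Finset.disjoint_left.2 fun β hβF hβp =>
    ((le_totalDegree hβF).trans_lt hF).not_ge ((mem_pow_idealOfVars_iff k p).1 hp β hβp)

lemma apolarForm_eq_zero_of_isHomogeneous {F p : MvPolynomial σ R} {d e : ℕ}
    (hF : F.IsHomogeneous d) (hp : p.IsHomogeneous e) (hde : d ≠ e) : apolarForm F p = 0 :=
  apolarForm_eq_zero <| Finset.disjoint_left.2 fun _ hβF hβp =>
    hde ((hF.degree_eq_sum_deg_support hβF).trans (hp.degree_eq_sum_deg_support hβp).symm)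

lemma apolarForm_X_mul_of_notMem_vars {F : MvPolynomial σ R} {i : σ} (hi : i ∉ F.vars)
    (p : MvPolynomial σ R) : apolarForm F (X i * p) = 0 := by
  refine apolarForm_eq_zero (Finset.disjoint_left.2 fun β hβF hβp => hi ?_)
  rw [support_X_mul] at hβp
  obtain ⟨γ, -, rfl⟩ := Finset.mem_map.1 hβp
  exact mem_vars_iff_mem_support i |>.2 ⟨_, hβF, by simp⟩

lemma apolarForm_X_mul_X_eq_zero {F : MvPolynomial σ R} {s : Set σ}
    (hF : ∀ β ∈ F.support, ∃ k ∈ s, β k ≠ 0) {i j : σ} (hi : i ∉ s) (hj : j ∉ s) :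
    apolarForm F (X i * X j) = 0 := by
  refine apolarForm_eq_zero (Finset.disjoint_left.2 fun β hβF hβ => ?_)
  obtain ⟨k, hk, hβk⟩ := hF β hβF
  rw [X, X, monomial_mul] at hβ
  obtain rfl := Finset.mem_singleton.1 (support_monomial_subset hβ)
  have hik : i ≠ k := fun h => hi (h ▸ hk)
  have hjk : j ≠ k := fun h => hj (h ▸ hk)
  exact hβk (by simp [hik, hjk])

lemma apolarForm_rename {e : σ → τ} (he : Function.Injective e) (F p : MvPolynomial σ R) :
    apolarForm (rename e F) (rename e p) = apolarForm F p := by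
  induction F using MvPolynomial.induction_on' with
  | add F G hF hG => simp only [map_add, LinearMap.add_apply, hF, hG]
  | monomial β c =>
    simp only [rename_monomial, apolarForm_apply, apolarPairing_monomial, coeff_coe,
      coeff_rename_mapDomain _ he, Finsupp.prod_mapDomain_index_inj he]

lemma apolarForm_homogeneousComponent_X_mul {F : MvPolynomial σ R} {d : ℕ}
    (hF : F.IsHomogeneous (d + 1)) (i : σ) (p : MvPolynomial σ R) :
    apolarForm F (X i * homogeneousComponent d p) = apolarForm F (X i * p) := by
  conv_rhs => rw [← sum_homogeneousComponent p, Finset.mul_sum, map_sum]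
  symm
  refine Finset.sum_eq_single d (fun k _ hkd => ?_) fun hd => ?_
  · refine apolarForm_eq_zero_of_isHomogeneous hF
      ((isHomogeneous_X R i).mul (homogeneousComponent_isHomogeneous k p)) fun h => hkd ?_
    omega
  · rw [homogeneousComponent_eq_zero _ _ (by simpa using hd), mul_zero, map_zero]

end Apolarity

lemma prod_descFactorial_mul_prod_factorial {σ R : Type*} [Fintype σ] [CommSemiring R]
    {β γ : σ →₀ ℕ} (h : γ ≤ β) :
    (∏ i, ((β i).descFactorial ((β - γ) i) : R)) * γ.prod (fun _ k => (k.factorial : R)) =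
      β.prod fun _ k => (k.factorial : R) := by
  rw [Finsupp.prod_fintype _ _ (by simp), Finsupp.prod_fintype _ _ (by simp),
    ← Finset.prod_mul_distrib]
  refine Finset.prod_congr rfl fun i _ => ?_
  have hfactorial := Nat.factorial_mul_descFactorial (n := β i) (k := β i - γ i) (Nat.sub_le _ _)
  rw [Nat.sub_sub_self (h i)] at hfactorial
  rw [Finsupp.tsub_apply, mul_comm]
  rw [← Nat.cast_mul, hfactorial]

section Contraction

variable {K : Type*} [Field K] {n : ℕ}

lemma coeff_contract_monomial (f : MvPowerSeries (Fin n) K) (β γ : Fin n →₀ ℕ) (c : K) :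
    (contract f (monomial β c)).coeff γ =
      if γ ≤ β then c * (MvPowerSeries.coeff (β - γ) f *
        ∏ i, ((β i).descFactorial ((β - γ) i) : K)) else 0 := by
  have hbasis : monomial β c = c • basisMonomials (Fin n) K β := by simp [smul_monomial]
  rw [hbasis, map_smul, contract, Module.Basis.constr_basis, coeff_smul, coeff_sum, smul_eq_mul]
  simp only [coeff_smul, coeff_monomial, smul_eq_mul, mul_ite, mul_one, mul_zero]
  split_ifs with h
  · rw [Finset.sum_eq_single_of_mem (β - γ) (Finset.mem_Iic.2 tsub_le_self),
      if_pos (tsub_tsub_cancel_of_le h)]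
    intro α hα hne
    refine if_neg fun hαγ => hne ?_
    rw [← hαγ, tsub_tsub_cancel_of_le (Finset.mem_Iic.1 hα)]
  · rw [Finset.sum_eq_zero, mul_zero]
    rintro α -
    exact if_neg fun hαγ : β - α = γ => h (hαγ ▸ tsub_le_self)

lemma coeff_contract_mul_prod_factorial (f : MvPowerSeries (Fin n) K)
    (F : MvPolynomial (Fin n) K) (γ : Fin n →₀ ℕ) :
    (contract f F).coeff γ * γ.prod (fun _ k => (k.factorial : K)) =
      apolarPairing F (MvPowerSeries.monomial γ 1 * f) := by
  induction F using MvPolynomial.induction_on' with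
  | add F G hF hG =>
    rw [map_add, map_add, coeff_add, add_mul, hF, hG, LinearMap.add_apply]
  | monomial β c =>
    rw [apolarPairing_monomial, coeff_contract_monomial, MvPowerSeries.coeff_monomial_mul]
    split_ifs with h
    · rw [← prod_descFactorial_mul_prod_factorial h]; ring
    · rw [zero_mul, mul_zero, mul_zero]

/-- The `K`-algebra map `f ↦ f mod Ann F` from polynomials to `A_F = R ⧸ Ann F`; it makes `A_F` a
quotient of the polynomial ring. -/
noncomputable def toApolarAlgebra (F : MvPolynomial (Fin n) K) :
    MvPolynomial (Fin n) K →ₐ[K] MvPowerSeries (Fin n) K ⧸ annR F :=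
  (Ideal.Quotient.mkₐ K (annR F)).comp (coeToMvPowerSeries.algHom K)

variable [CharZero K]

lemma mem_annR_iff {f : MvPowerSeries (Fin n) K} {F : MvPolynomial (Fin n) K} :
    f ∈ annR F ↔ ∀ u, apolarPairing F (u * f) = 0 := by
  refine ⟨fun h u => ?_, fun h u => ?_⟩
  · have hcoeff := coeff_contract_mul_prod_factorial (u * f) F 0
    rw [h u] at hcoeff
    simpa using hcoeff.symm
  · ext γ
    have hcoeff := coeff_contract_mul_prod_factorial (u * f) F γ
    rw [← mul_assoc, h] at hcoeff
    refine (mul_eq_zero.1 hcoeff).resolve_right ?_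
    exact Finset.prod_ne_zero_iff.2 fun i _ => Nat.cast_ne_zero.2 (Nat.factorial_ne_zero _)

lemma exists_sub_coe_mem_annR (F : MvPolynomial (Fin n) K) (f : MvPowerSeries (Fin n) K) :
    ∃ p : MvPolynomial (Fin n) K, f - p ∈ annR F := by
  set p := MvPowerSeries.truncTotal (F.totalDegree + 1) f
  have horder : F.totalDegree < (f - p).order := by
    refine lt_of_lt_of_le (Nat.cast_lt.2 (Nat.lt_succ_self _)) (MvPowerSeries.nat_le_order ?_)
    intro β hβ
    rw [map_sub, coeff_coe, MvPowerSeries.coeff_truncTotal _ hβ, sub_self]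
  refine ⟨p, mem_annR_iff.2 fun u => apolarPairing_eq_zero_of_totalDegree_lt_order ?_⟩
  exact horder.trans_le (le_add_self.trans MvPowerSeries.le_order_mul)

lemma toApolarAlgebra_surjective (F : MvPolynomial (Fin n) K) :
    Function.Surjective (toApolarAlgebra F) := by
  intro a
  obtain ⟨f, rfl⟩ := Ideal.Quotient.mk_surjective a
  obtain ⟨p, hp⟩ := exists_sub_coe_mem_annR F f
  exact ⟨p, (Ideal.Quotient.eq.2 hp).symm⟩

lemma coe_mem_annR_iff {F p : MvPolynomial (Fin n) K} :
    (p : MvPowerSeries (Fin n) K) ∈ annR F ↔ ∀ u, apolarForm F (u * p) = 0 := by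
  rw [mem_annR_iff]
  refine ⟨fun h u => by simpa [apolarForm_apply] using h u, fun h u => ?_⟩
  obtain ⟨v, hv⟩ := exists_sub_coe_mem_annR F u
  have hsplit : u * p = (v * p : MvPolynomial (Fin n) K) + p * (u - v) := by
    push_cast; ring
  rw [hsplit, map_add, mem_annR_iff.1 hv, add_zero, ← apolarForm_apply, h]

lemma toApolarAlgebra_eq_zero_iff {F p : MvPolynomial (Fin n) K} :
    toApolarAlgebra F p = 0 ↔ ∀ u, apolarForm F (u * p) = 0 :=
  Ideal.Quotient.eq_zero_iff_mem.trans coe_mem_annR_iff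

lemma nonempty_quotient_annR_algEquiv {F G : MvPolynomial (Fin n) K}
    {φ : MvPolynomial (Fin n) K →ₐ[K] MvPolynomial (Fin n) K}
    (hφ : ∀ i, φ (X i) - X i ∈ idealOfVars (Fin n) K ^ 2)
    (hFG : ∀ f, apolarForm G (φ f) = apolarForm F f) :
    Nonempty ((MvPowerSeries (Fin n) K ⧸ annR F) ≃ₐ[K] (MvPowerSeries (Fin n) K ⧸ annR G)) := by
  have hlift (v : MvPolynomial (Fin n) K) :
      ∃ u, toApolarAlgebra G (φ u) = toApolarAlgebra G v := by
    obtain ⟨u, hu⟩ := exists_map_sub_mem_pow_idealOfVars hφ v (G.totalDegree + 1)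
    refine ⟨u, ?_⟩
    rw [← sub_eq_zero, ← map_sub, toApolarAlgebra_eq_zero_iff]
    exact fun w => apolarForm_eq_zero_of_mem_pow_idealOfVars (Nat.lt_succ_self _)
      (Ideal.mul_mem_left _ w hu)
  have hsurj : Function.Surjective ((toApolarAlgebra G).comp φ) := by
    intro a
    obtain ⟨v, rfl⟩ := toApolarAlgebra_surjective G a
    exact hlift v
  have hker : RingHom.ker (toApolarAlgebra F) = RingHom.ker ((toApolarAlgebra G).comp φ) := by
    ext p
    simp only [RingHom.mem_ker, AlgHom.comp_apply]
    refine ⟨fun hp => ?_, fun hp => ?_⟩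
    · rw [toApolarAlgebra_eq_zero_iff] at hp ⊢
      intro v
      obtain ⟨u, hu⟩ := hlift v
      have hdiff : toApolarAlgebra G (φ u - v) = 0 := by rw [map_sub, hu, sub_self]
      have hv := toApolarAlgebra_eq_zero_iff.1 hdiff (φ p)
      rwa [mul_sub, map_sub, mul_comm, ← map_mul, hFG, hp, zero_sub, neg_eq_zero, mul_comm] at hv
    · rw [toApolarAlgebra_eq_zero_iff] at hp ⊢
      intro u
      rw [← hFG, map_mul, hp]
  exact ⟨((Ideal.quotientKerAlgEquivOfSurjective (toApolarAlgebra_surjective F)).symm.trans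
    (Ideal.quotientEquivAlgOfEq K hker)).trans (Ideal.quotientKerAlgEquivOfSurjective hsurj)⟩

end Contraction

lemma totalDegree_rename_add_le {σ τ R : Type*} [CommSemiring R] {e : σ → τ}
    {F : MvPolynomial σ R} {Q : MvPolynomial τ R} {k : ℕ} (hF : F.totalDegree ≤ k)
    (hQ : Q.totalDegree ≤ k) : (rename e F + Q).totalDegree ≤ k :=
  (totalDegree_add _ _).trans (max_le ((totalDegree_rename_le e F).trans hF) hQ)

section Nondegenerate

variable {K : Type*} [Field K] [CharZero K] {m n d : ℕ} {F : MvPolynomial (Fin n) K}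

lemma linForm_mem_annR_iff {l : Fin n → K} :
    linForm l ∈ annR F ↔ ∀ u, ∑ i, l i * apolarForm F (X i * u) = 0 := by
  have hcoe : linForm l = (∑ i, l i • X i : MvPolynomial (Fin n) K) := by
    rw [linForm, ← coeToMvPowerSeries.ringHom_apply, map_sum]
    refine Finset.sum_congr rfl fun i _ => ?_
    rw [coeToMvPowerSeries.ringHom_apply, X, smul_monomial, coe_monomial, smul_eq_mul, mul_one]
  have hsum (u : MvPolynomial (Fin n) K) :
      apolarForm F (u * ∑ i, l i • X i) = ∑ i, l i * apolarForm F (X i * u) := by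
    simp_rw [Finset.mul_sum, map_sum, mul_smul_comm, map_smul, smul_eq_mul, mul_comm u]
  rw [hcoe, coe_mem_annR_iff]
  simp_rw [hsum]

lemma exists_apolarForm_X_mul_eq (hF : nondegenerate F) (c : Fin n → K) :
    ∃ p, ∀ i, apolarForm F (X i * p) = c i := by
  let partials : MvPolynomial (Fin n) K →ₗ[K] Fin n → K :=
    LinearMap.pi fun i => apolarForm F ∘ₗ LinearMap.mulLeft K (X i)
  suffices hsurj : Function.Surjective partials from
    (hsurj c).imp fun p hp i => congrFun hp i
  rw [← LinearMap.dualMap_injective_iff, injective_iff_map_eq_zero]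
  intro ℓ hℓ
  obtain ⟨l, rfl⟩ := (dotProductEquiv K (Fin n)).surjective ℓ
  rw [hF l (linForm_mem_annR_iff.2 fun u => LinearMap.congr_fun hℓ u), map_zero]

lemma exists_isHomogeneous_apolarForm_X_mul_eq (hF : F.IsHomogeneous (d + 1))
    (hnd : nondegenerate F) (c : Fin n → K) :
    ∃ p : MvPolynomial (Fin n) K, p.IsHomogeneous d ∧ ∀ i, apolarForm F (X i * p) = c i := by
  obtain ⟨p, hp⟩ := exists_apolarForm_X_mul_eq hnd c
  refine ⟨homogeneousComponent d p, homogeneousComponent_isHomogeneous d p, fun i => ?_⟩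
  rw [apolarForm_homogeneousComponent_X_mul hF, hp]

variable {e : Fin n → Fin m}

lemma exists_isHomogeneous_apolarForm_rename_X_mul_eq (he : Function.Injective e)
    (hF : F.IsHomogeneous (d + 1)) (hnd : nondegenerate F) {c : Fin m → K}
    (hc : ∀ i ∉ Set.range e, c i = 0) :
    ∃ q : MvPolynomial (Fin m) K, q.IsHomogeneous d ∧
      ∀ i, apolarForm (rename e F) (X i * q) = c i := by
  obtain ⟨p, hp, hpc⟩ := exists_isHomogeneous_apolarForm_X_mul_eq hF hnd (c ∘ e)
  refine ⟨rename e p, hp.rename_isHomogeneous, fun i => ?_⟩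
  by_cases hi : i ∈ Set.range e
  · obtain ⟨j, rfl⟩ := hi
    rw [← rename_X, ← map_mul, apolarForm_rename he, hpc, Function.comp_apply]
  · rw [hc i hi, apolarForm_X_mul_of_notMem_vars]
    refine fun hvars => hi ?_
    obtain ⟨j, -, hj⟩ := Finset.mem_image.1 (vars_rename e F hvars)
    exact ⟨j, hj⟩

lemma exists_mem_pow_apolarForm_X_mul_eq (he : Function.Injective e)
    (hF : F.IsHomogeneous (d + 1)) (hnd : nondegenerate F) {Q : MvPolynomial (Fin m) K}
    (hQ : Q.totalDegree ≤ d) {c : Fin m → K} (hc : ∀ i ∉ Set.range e, c i = 0) :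
    ∃ q ∈ idealOfVars (Fin m) K ^ d, apolarForm (rename e F + Q) q = 0 ∧
      ∀ i, apolarForm (rename e F + Q) (X i * q) = c i := by
  by_cases hc0 : ∀ i, c i = 0
  · exact ⟨0, zero_mem _, map_zero _, fun i => by rw [mul_zero, map_zero, hc0]⟩
  push Not at hc0
  obtain ⟨k, hk⟩ := hc0
  obtain ⟨p, hp, hpc⟩ := exists_isHomogeneous_apolarForm_rename_X_mul_eq he hF hnd hc
  have hp_mem := mem_pow_idealOfVars_of_isHomogeneous hp
  have hXp_mem (i : Fin m) := X_mul_mem_pow_idealOfVars i hp_mem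
  have hXp (i : Fin m) : apolarForm (rename e F + Q) (X i * p) = c i := by
    rw [map_add, LinearMap.add_apply, hpc,
      apolarForm_eq_zero_of_mem_pow_idealOfVars (Nat.lt_succ_of_le hQ) (hXp_mem i), add_zero]
  have hXXp (i : Fin m) : apolarForm (rename e F + Q) (X i * (X k * p)) = 0 :=
    apolarForm_eq_zero_of_mem_pow_idealOfVars
      (Nat.lt_succ_of_le (totalDegree_rename_add_le hF.totalDegree_le (Nat.le_succ_of_le hQ)))
      (X_mul_mem_pow_idealOfVars i (hXp_mem k))
  -- A multiple of `X k * p` corrects the value at `p`; being of degree `d + 1`, it leaves the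
  -- values at the `X i * p` unchanged.
  refine ⟨p - (apolarForm (rename e F + Q) p / c k) • (X k * p), ?_, ?_, fun i => ?_⟩
  · rw [smul_eq_C_mul]
    exact sub_mem hp_mem (Ideal.mul_mem_left _ _ (Ideal.pow_le_pow_right d.le_succ (hXp_mem k)))
  · rw [map_sub, map_smul, hXp, smul_eq_mul, div_mul_cancel₀ _ hk, sub_self]
  · rw [mul_sub, mul_smul_comm, map_sub, map_smul, hXp, hXXp, smul_zero, sub_zero]

end Nondegenerate

lemma exists_add_swap_eq {ι K : Type*} [DivisionSemiring K] [NeZero (2 : K)] {B : ι → ι → K}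
    {s : Set ι} (hsymm : ∀ i j, B i j = B j i) (hB : ∀ i ∉ s, ∀ j ∉ s, B i j = 0) :
    ∃ C : ι → ι → K, (∀ i j, C i j + C j i = B i j) ∧ ∀ i ∉ s, ∀ j, C i j = 0 := by
  classical
  refine ⟨fun i j => if i ∈ s then if j ∈ s then B i j / 2 else B i j else 0, fun i j => ?_,
    fun i hi j => if_neg hi⟩
  by_cases hi : i ∈ s <;> by_cases hj : j ∈ s <;> simp only [hi, hj, if_true, if_false]
  · rw [hsymm j i, add_halves]
  · rw [add_zero]
  · rw [zero_add, hsymm]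
  · rw [add_zero, hB i hi j hj]

lemma apolarForm_aeval_X_add {σ R : Type*} [CommRing R] {d : ℕ} {G H : MvPolynomial σ R}
    {q : σ → MvPolynomial σ R} (hd : 2 ≤ d) (hG : G.totalDegree ≤ d + 1) (hH : H.IsHomogeneous 2)
    (hq : ∀ i, q i ∈ idealOfVars σ R ^ d) (hGq : ∀ i, apolarForm G (q i) = 0)
    (hGH : ∀ i j, apolarForm G (X i * q j) + apolarForm G (X j * q i) = apolarForm H (X i * X j))
    (f : MvPolynomial σ R) :
    apolarForm G (aeval (fun i => X i + q i) f) = apolarForm (G + H) f := by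
  set φ : MvPolynomial σ R →ₐ[R] MvPolynomial σ R := aeval fun i => X i + q i
  have hφX (i : σ) : φ (X i) = X i + q i := aeval_X _ i
  suffices h : apolarForm G ∘ₗ φ.toLinearMap = apolarForm (G + H) from LinearMap.congr_fun h f
  refine linearMap_ext_of_degree_lt_three ?_ (fun i => ?_) (fun i j => ?_) fun f hf => ?_ <;>
    rw [LinearMap.comp_apply, AlgHom.toLinearMap_apply, map_add, LinearMap.add_apply]
  · rw [map_one, apolarForm_eq_zero_of_isHomogeneous hH (isHomogeneous_one σ R) two_ne_zero,
      add_zero]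
  · rw [hφX, map_add, hGq,
      apolarForm_eq_zero_of_isHomogeneous hH (isHomogeneous_X R i) (by decide)]
  · have hqq : q i * q j ∈ idealOfVars σ R ^ (d + d) :=
      pow_add (idealOfVars σ R) d d ▸ Ideal.mul_mem_mul (hq i) (hq j)
    have hexpand : φ (X i * X j) = X i * X j + (X i * q j + X j * q i) + q i * q j := by
      rw [map_mul, hφX, hφX]; ring
    rw [hexpand, map_add, map_add, map_add, hGH,
      apolarForm_eq_zero_of_mem_pow_idealOfVars (by omega) hqq, add_zero]
  · have hsub : φ f - f ∈ idealOfVars σ R ^ (3 + (d - 1)) :=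
      map_sub_mem_pow_idealOfVars (fun i => by
        rw [hφX, add_sub_cancel_left, Nat.sub_add_cancel (by omega)]; exact hq i) hf
    rw [← sub_add_cancel (φ f) f, map_add,
      apolarForm_eq_zero_of_mem_pow_idealOfVars (by omega) hsub, zero_add,
      apolarForm_eq_zero_of_mem_pow_idealOfVars (Nat.lt_succ_of_le hH.totalDegree_le) hf, add_zero]

theorem aF_plus_mixed_quadratic_iso_general {K : Type*} [Field K] [CharZero K] {m n d : ℕ}
    {e : Fin n → Fin m} (he : Function.Injective e) (hd : 2 ≤ d)
    {F : MvPolynomial (Fin n) K} (hF : F.IsHomogeneous (d + 1)) (hnd : nondegenerate F)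
    {Q : MvPolynomial (Fin m) K} (hQ : Q.totalDegree ≤ d)
    {H : MvPolynomial (Fin m) K} (hH : H.IsHomogeneous 2)
    (hHe : ∀ β ∈ H.support, ∃ i ∈ Set.range e, β i ≠ 0) :
    Nonempty ((MvPowerSeries (Fin m) K ⧸ annR (rename e F + Q + H)) ≃ₐ[K]
      (MvPowerSeries (Fin m) K ⧸ annR (rename e F + Q))) := by
  obtain ⟨c, hcH, hc⟩ := exists_add_swap_eq (B := fun i j => apolarForm H (X i * X j))
    (fun i j => by rw [mul_comm]) fun i hi j hj => apolarForm_X_mul_X_eq_zero hHe hi hj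
  choose q hq hq_zero hqc using fun j =>
    exists_mem_pow_apolarForm_X_mul_eq he hF hnd hQ (c := fun i => c i j) fun i hi => hc i hi j
  have hdeg : (rename e F + Q).totalDegree ≤ d + 1 :=
    totalDegree_rename_add_le hF.totalDegree_le (Nat.le_succ_of_le hQ)
  refine nonempty_quotient_annR_algEquiv (φ := aeval fun i => X i + q i) (fun i => ?_)
    (apolarForm_aeval_X_add hd hdeg hH hq hq_zero fun i j => ?_)
  · rw [aeval_X, add_sub_cancel_left]
    exact Ideal.pow_le_pow_right hd (hq i)
  · rw [hqc, hqc, hcH]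

/-- For `m > n ≥ 1`, a non-degenerate cubic form `F_3 ∈ K[y_1,…,y_n]` and a
quadratic form `H` each of whose monomials is divisible by some `y_i` with
`i ≤ n`, the algebras `A_{F_3 + y_{n+1}^2 + ⋯ + y_m^2 + H}` and
`A_{F_3 + y_{n+1}^2 + ⋯ + y_m^2}` are isomorphic as `K`-algebras. -/
theorem aF_plus_mixed_quadratic_iso
    {K : Type*} [Field K] [IsAlgClosed K] [CharZero K] {m n : ℕ}
    (hn : 1 ≤ n) (hnm : n < m)
    (F3 : MvPolynomial (Fin n) K)
    (hF3 : F3.IsHomogeneous 3) (hnd : nondegenerate F3)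
    (H : MvPolynomial (Fin m) K) (hH : H.IsHomogeneous 2)
    (hHmix : ∀ β ∈ H.support, ∃ i : Fin m, (i : ℕ) < n ∧ β i ≠ 0) :
    Nonempty ((MvPowerSeries (Fin m) K ⧸
        annR (K := K) (n := m) (MvPolynomial.rename (Fin.castLE hnm.le) F3 +
          (∑ j ∈ Finset.univ.filter (fun j : Fin m => n ≤ (j : ℕ)),
            MvPolynomial.X j ^ 2) + H)) ≃ₐ[K]
      (MvPowerSeries (Fin m) K ⧸
        annR (K := K) (n := m) (MvPolynomial.rename (Fin.castLE hnm.le) F3 +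
          ∑ j ∈ Finset.univ.filter (fun j : Fin m => n ≤ (j : ℕ)),
            MvPolynomial.X j ^ 2))) :=
  aF_plus_mixed_quadratic_iso_general (Fin.castLE_injective hnm.le) le_rfl hF3 hnd
    (IsHomogeneous.sum _ _ 2 fun j _ => isHomogeneous_X_pow j 2).totalDegree_le hH
    (by simpa [Fin.range_castLE] using hHmix)
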